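/- Let K be a simplicial complex whose vertex set is partitioned into parts V_0,…,V_m with H̃_{m-1}(K, F) = 0 for a field F. For S ⊆ {0,…,m}, let K̃_S be the subcomplex of simplices of K whose colour set does not contain S. If H̃_{|S|-2}(K̃_S, F) = 0 for every S with 1 ≤ |S| ≤ m, then K contains a rainbow simplex. -/

import Mathlib

open Finset

/-- The faces of an abstract simplicial complex: a set of nonempty finite sets of
vertices, closed under taking nonempty subsets. -/
def IsComplex {V : Type*} (S : Set (Finset V)) : Prop :=
  (∀ s ∈ S, s.Nonempty) ∧ ∀ s ∈ S, ∀ t ⊆ s, t.Nonempty → t ∈ S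

/-- The nerve of a collection `Γ` of (sub)complexes, as a set of finsets of the index
type: the simplices are the nonempty subcollections with a common face. -/
def nerveC {ι V : Type*} (Γ : ι → Set (Finset V)) : Set (Finset ι) :=
  {σ | σ.Nonempty ∧ (⋂ i ∈ (σ : Finset ι), Γ i).Nonempty}

/-- Simplicial `n`-chains (dimension `n`, i.e. on vertex sets of cardinality `n+1`)
on the vertex type `V`, with coefficients in `A`. -/
abbrev Chains (A V : Type*) [AddCommGroup A] [LinearOrder V] (n : ℕ) : Type _ :=
  {s : Finset V // s.card = n + 1} →₀ A

variable (R : Type*) [CommRing R] (A : Type*) [AddCommGroup A] [Module R A]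
variable (V : Type*) [LinearOrder V]

/-- The simplicial boundary map, with the usual alternating signs determined by the
linear order on the vertices. -/
noncomputable def bdry (n : ℕ) : Chains A V (n + 1) →ₗ[R] Chains A V n :=
  Finsupp.lsum R fun s =>
    ∑ v ∈ (s : Finset V).attach,
      ((-1 : ℤ) ^ (((s : Finset V).filter (fun w => w < v.1)).card)) •
        (Finsupp.lsingle (R := R) ⟨(s : Finset V).erase v.1, by
          rw [Finset.card_erase_of_mem v.2, s.2]; rfl⟩)

/-- The augmentation map on `0`-chains. -/
noncomputable def aug : Chains A V 0 →ₗ[R] A :=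
  Finsupp.lsum R fun _ => LinearMap.id

/-- Reduced cycles: kernel of the boundary map, resp. of the augmentation in degree 0. -/
noncomputable def cycles : (n : ℕ) → Submodule R (Chains A V n)
  | 0 => LinearMap.ker (aug R A V)
  | (n + 1) => LinearMap.ker (bdry R A V n)

/-- Chains supported on the simplices belonging to `S`. -/
def chainsIn (S : Set (Finset V)) (n : ℕ) : Submodule R (Chains A V n) :=
  Finsupp.supported A R {s : {s : Finset V // s.card = n + 1} | ↑s ∈ S}

/-- Reduced cycles of the complex `S`. -/
noncomputable def cyclesIn (S : Set (Finset V)) (n : ℕ) : Submodule R (Chains A V n) :=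
  cycles R A V n ⊓ chainsIn R A V S n

/-- Boundaries of chains of the complex `S`. -/
noncomputable def boundariesIn (S : Set (Finset V)) (n : ℕ) : Submodule R (Chains A V n) :=
  Submodule.map (bdry R A V n) (chainsIn R A V S (n + 1))

/-- Reduced simplicial homology of the complex `S` in degree `n ≥ 0`,
with coefficients in the `R`-module `A`. -/
noncomputable abbrev redH (S : Set (Finset V)) (n : ℕ) : Type _ :=
  (cyclesIn R A V S n) ⧸
    (Submodule.comap (cyclesIn R A V S n).subtype (boundariesIn R A V S n))

/-- Vanishing of the reduced homology of `S` in degree `n : ℤ`, with the convention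
that `H̃₋₁(S) = 0` iff `S` is nonempty (and trivial vanishing below degree `-1`). -/
def RedHVanish (S : Set (Finset V)) (n : ℤ) : Prop :=
  if n < -1 then True
  else if n = -1 then S.Nonempty
  else Subsingleton (redH R A V S n.toNat)

open scoped Classical in
/-- The dimension (rank) of the reduced homology of `S` in degree `n : ℤ`; in degree `-1`
it is `0` iff `S` is nonempty, in accordance with the convention. -/
noncomputable def redHRank (S : Set (Finset V)) (n : ℤ) : Cardinal :=
  if n < -1 then 0
  else if n = -1 then (if S.Nonempty then (0 : Cardinal) else 1)
  else Module.rank R (redH R A V S n.toNat)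




/-- sign -/
def sgn (k : Type*) [Field k] {W : Type*} [LinearOrder W] (s : Finset W) (v : W) : k :=
  (-1) ^ (s.filter (fun w => w < v)).card

/-- augmented boundary -/
noncomputable def DD (k W : Type*) [Field k] [LinearOrder W] :
    (Finset W →₀ k) →ₗ[k] (Finset W →₀ k) :=
  Finsupp.linearCombination k fun s => ∑ v ∈ s, sgn k s v • Finsupp.single (s.erase v) (1 : k)

/-- wedge with a vertex -/
noncomputable def ww (k : Type*) {W : Type*} [Field k] [LinearOrder W] (i : W) :
    (Finset W →₀ k) →ₗ[k] (Finset W →₀ k) :=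
  Finsupp.linearCombination k fun s =>
    if i ∈ s then 0 else sgn k s i • Finsupp.single (insert i s) (1 : k)

theorem DD_single {k W : Type*} [Field k] [LinearOrder W] (s : Finset W) :
    DD k W (Finsupp.single s 1) = ∑ v ∈ s, sgn k s v • Finsupp.single (s.erase v) (1 : k) := by
  simp [DD]

theorem ww_single {k W : Type*} [Field k] [LinearOrder W] (i : W) (s : Finset W) :
    ww k i (Finsupp.single s 1) =
      if i ∈ s then 0 else sgn k s i • Finsupp.single (insert i s) (1 : k) := by
  simp [ww]

theorem sgn_mul_self {k W : Type*} [Field k] [LinearOrder W] (s : Finset W) (v : W) :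
    sgn k s v * sgn k s v = 1 := by
  unfold sgn
  rw [← mul_pow]; simp

theorem sgn_insert {k W : Type*} [Field k] [LinearOrder W] (s : Finset W) (i v : W) (hi : i ∉ s) :
    sgn k (insert i s) v = (if i < v then -1 else 1) * sgn k s v := by
  unfold sgn
  rw [Finset.filter_insert]
  split_ifs with h
  · rw [Finset.card_insert_of_notMem (by simp [hi]), pow_succ]; ring
  · simp

theorem DD_ww {k W : Type*} [Field k] [LinearOrder W] (i : W) (x : Finset W →₀ k) :
    DD k W (ww k i x) = x - ww k i (DD k W x) := by
  have key : DD k W ∘ₗ ww k i = LinearMap.id - ww k i ∘ₗ DD k W := by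
    apply Finsupp.lhom_ext'
    intro s
    apply LinearMap.ext_ring
    simp only [LinearMap.comp_apply, Finsupp.lsingle_apply, LinearMap.sub_apply, LinearMap.id_apply]
    rw [DD_single, ww_single, map_sum]
    simp only [map_smul, ww_single]
    split_ifs with hi
    · rw [Finset.sum_eq_single i]
      · have h1 : sgn k s i = sgn k (s.erase i) i := by
          conv_lhs => rw [← Finset.insert_erase hi]
          rw [sgn_insert _ _ _ (Finset.notMem_erase i s)]; simp
        simp [h1, sgn_mul_self, Finset.insert_erase hi]
      · intro v hv hvi
        rw [if_pos (by simp [hi, Ne.symm hvi])]; simp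
      · simp [hi]
    · rw [map_smul, DD_single, Finset.sum_insert hi, smul_add]
      have h1 : sgn k (insert i s) i = sgn k s i := by
        rw [sgn_insert _ _ _ hi]; simp
      rw [h1, smul_smul, sgn_mul_self, Finset.erase_insert hi, one_smul, sub_eq_add_neg]
      congr 1
      rw [Finset.smul_sum, ← Finset.sum_neg_distrib]
      apply Finset.sum_congr rfl
      intro v hv
      have hne : i ≠ v := fun h => hi (h ▸ hv)
      rw [if_neg (by simp [hi]), smul_smul, smul_smul, ← neg_smul,
        Finset.erase_insert_of_ne hne]
      congr 1
      rw [sgn_insert _ _ _ hi]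
      have h2 : sgn k s i = (if v < i then -1 else 1) * sgn k (s.erase v) i := by
        conv_lhs => rw [← Finset.insert_erase hv]
        rw [sgn_insert _ _ _ (Finset.notMem_erase v s)]
      rw [h2]
      rcases lt_or_gt_of_ne hne with h | h
      · simp [h, h.not_gt]; ring
      · simp [h, h.not_gt]; ring
  have := LinearMap.congr_fun key x
  simpa using this

theorem ww_min {k W : Type*} [Field k] [LinearOrder W] (a : W) (s : Finset W)
    (h : ∀ x ∈ s, a < x) :
    ww k a (Finsupp.single s 1) = Finsupp.single (insert a s) (1 : k) := by
  have h0 : s.filter (fun w => w < a) = ∅ := by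
    rw [Finset.filter_eq_empty_iff]; intro x hx; exact (h x hx).not_gt
  have : a ∉ s := fun ha => lt_irrefl _ (h a ha)
  rw [ww_single, if_neg this]
  simp [sgn, h0]

theorem DD_DD {k W : Type*} [Field k] [LinearOrder W] (x : Finset W →₀ k) :
    DD k W (DD k W x) = 0 := by
  have key : DD k W ∘ₗ DD k W = 0 := by
    apply Finsupp.lhom_ext'
    intro s
    apply LinearMap.ext_ring
    simp only [LinearMap.comp_apply, Finsupp.lsingle_apply, LinearMap.zero_apply]
    induction s using Finset.induction_on_min with
    | empty => simp [DD_single]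
    | insert a s ha ih =>
      rw [← ww_min a s ha, DD_ww, map_sub, DD_ww, ih]; simp
  exact LinearMap.congr_fun key x

/-- value of the colour map on a simplex -/
noncomputable def pp0 (k : Type*) {U W : Type*} [Field k] [LinearOrder U] [LinearOrder W]
    (c : U → W) (s : Finset U) : Finset W →₀ k :=
  (s.sort (· ≤ ·)).foldr (fun v x => ww k (c v) x) (Finsupp.single ∅ 1)

/-- chain map induced by the colouring -/
noncomputable def pp (k : Type*) {U W : Type*} [Field k] [LinearOrder U] [LinearOrder W]
    (c : U → W) : (Finset U →₀ k) →ₗ[k] (Finset W →₀ k) :=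
  Finsupp.linearCombination k (pp0 k c)

theorem pp_single {k U W : Type*} [Field k] [LinearOrder U] [LinearOrder W]
    (c : U → W) (s : Finset U) : pp k c (Finsupp.single s 1) = pp0 k c s := by
  simp [pp]

theorem pp0_empty {k U W : Type*} [Field k] [LinearOrder U] [LinearOrder W]
    (c : U → W) : pp0 k c ∅ = Finsupp.single ∅ 1 := by
  simp [pp0]

theorem pp0_insert {k U W : Type*} [Field k] [LinearOrder U] [LinearOrder W]
    (c : U → W) (a : U) (s : Finset U) (h : ∀ x ∈ s, a < x) :
    pp0 k c (insert a s) = ww k (c a) (pp0 k c s) := by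
  unfold pp0
  rw [Finset.sort_insert (· ≤ ·) (fun b hb => (h b hb).le) (fun ha => lt_irrefl _ (h a ha))]
  rfl

theorem DD_pp {k U W : Type*} [Field k] [LinearOrder U] [LinearOrder W]
    (c : U → W) (x : Finset U →₀ k) : DD k W (pp k c x) = pp k c (DD k U x) := by
  have key : DD k W ∘ₗ pp k c = pp k c ∘ₗ DD k U := by
    apply Finsupp.lhom_ext'
    intro s
    apply LinearMap.ext_ring
    simp only [LinearMap.comp_apply, Finsupp.lsingle_apply]
    induction s using Finset.induction_on_min with
    | empty => simp [DD_single, pp_single, pp0_empty]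
    | insert a s ha ih =>
      rw [pp_single, pp0_insert c a s ha, DD_ww, ← ww_min a s ha, DD_ww, map_sub, ← pp_single, ih,
        DD_single]
      congr 1
      simp only [map_sum, map_smul]
      apply Finset.sum_congr rfl
      intro v hv
      have h' : ∀ x ∈ s.erase v, a < x := fun x hx => ha x (Finset.mem_of_mem_erase hx)
      rw [ww_min a _ h', pp_single, pp_single, pp0_insert c a _ h']
  exact LinearMap.congr_fun key x

theorem pp0_supp {k U W : Type*} [Field k] [LinearOrder U] [LinearOrder W]
    (c : U → W) (s : Finset U) :
    pp0 k c s ∈ Finsupp.supported k k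
      {T : Finset W | T.card = s.card ∧ ∀ i ∈ T, ∃ v ∈ s, c v = i} := by
  induction s using Finset.induction_on_min with
  | empty =>
    rw [pp0_empty]
    exact Finsupp.single_mem_supported k _ (by simp)
  | insert a s ha ih =>
    rw [pp0_insert c a s ha]
    have hns : a ∉ s := fun h => lt_irrefl _ (ha a h)
    rw [ww, Finsupp.linearCombination_apply]
    refine Submodule.sum_mem _ fun T hT => Submodule.smul_mem _ _ ?_
    obtain ⟨h1, h2⟩ := (Finsupp.mem_supported k _).1 ih hT
    split_ifs with h
    · exact Submodule.zero_mem _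
    · refine Submodule.smul_mem _ _ (Finsupp.single_mem_supported k _ ⟨?_, ?_⟩)
      · rw [Finset.card_insert_of_notMem h, Finset.card_insert_of_notMem hns, h1]
      · intro i hi
        rcases Finset.mem_insert.1 hi with rfl | hi
        · exact ⟨a, by simp, rfl⟩
        · obtain ⟨v, hv, e⟩ := h2 i hi
          exact ⟨v, by simp [hv], e⟩

/-- No chain endomorphism of the full simplex fixing the empty simplex is off-diagonal. -/
theorem no_offdiag {k W : Type*} [Field k] [LinearOrder W] [Fintype W] (w0 : W)
    (f : (Finset W →₀ k) →ₗ[k] (Finset W →₀ k))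
    (hf : ∀ x, DD k W (f x) = f (DD k W x))
    (h0 : f (Finsupp.single ∅ 1) = Finsupp.single ∅ 1)
    (hd : ∀ S : Finset W, S.Nonempty → f (Finsupp.single S 1) S = 0) : False := by
  classical
  let ep : (Finset W →₀ k) →ₗ[k] (Finset W →₀ k) :=
    Finsupp.linearCombination k fun s => (-1 : k) ^ s.card • Finsupp.single s (1 : k)
  have ep_single : ∀ s, ep (Finsupp.single s 1) = (-1 : k) ^ s.card • Finsupp.single s (1 : k) := by
    intro s; simp [ep]
  have hanti : ep ∘ₗ DD k W = - (DD k W ∘ₗ ep) := by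
    apply Finsupp.lhom_ext'
    intro s
    apply LinearMap.ext_ring
    simp only [LinearMap.comp_apply, Finsupp.lsingle_apply, LinearMap.neg_apply]
    rw [ep_single, map_smul, DD_single, map_sum, Finset.smul_sum, ← Finset.sum_neg_distrib]
    apply Finset.sum_congr rfl
    intro v hv
    rw [map_smul, ep_single, smul_smul, smul_smul, ← neg_smul]
    congr 1
    rw [← Finset.card_erase_add_one hv, pow_succ]; ring
  let g := f ∘ₗ ww k w0
  have hfg : f = DD k W ∘ₗ g + g ∘ₗ DD k W := by
    ext1 s
    apply LinearMap.ext
    intro a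
    simp only [LinearMap.comp_apply, LinearMap.add_apply, g]
    rw [hf, ← map_add, DD_ww]; simp
  have htr0 : LinearMap.trace k _ (f ∘ₗ ep) = 0 := by
    have e1 : f ∘ₗ ep = DD k W ∘ₗ (g ∘ₗ ep) - (g ∘ₗ ep) ∘ₗ DD k W := by
      apply LinearMap.ext
      intro x
      have h1 := LinearMap.congr_fun hanti x
      have h2 := LinearMap.congr_fun hfg (ep x)
      simp only [LinearMap.comp_apply, LinearMap.add_apply, LinearMap.sub_apply,
        LinearMap.neg_apply] at h1 h2 ⊢
      rw [h2, h1, map_neg, sub_neg_eq_add]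
    rw [e1]
    refine (LinearMap.map_sub (LinearMap.trace k (Finset W →₀ k)) (DD k W ∘ₗ (g ∘ₗ ep))
      ((g ∘ₗ ep) ∘ₗ DD k W)).trans ?_
    rw [LinearMap.trace_comp_comm', sub_self]
  have htr1 : LinearMap.trace k _ (f ∘ₗ ep) = 1 := by
    rw [LinearMap.trace_eq_matrix_trace k (Finsupp.basisSingleOne (R := k) (ι := Finset W)),
      Matrix.trace, Finset.sum_eq_single ∅]
    · simp [LinearMap.toMatrix_apply, ep_single, h0]
    · intro S _ hS
      rw [Matrix.diag_apply, LinearMap.toMatrix_apply, Finsupp.coe_basisSingleOne,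
        LinearMap.comp_apply, ep_single, LinearMap.map_smul]
      simp [-Finsupp.smul_single, hd S (Finset.nonempty_iff_ne_empty.2 hS)]
    · simp
  rw [htr0] at htr1
  exact zero_ne_one htr1

/-- embedding of graded chains into total chains -/
noncomputable def emb (k U : Type*) [Field k] [LinearOrder U] (n : ℕ) :
    Chains k U n →ₗ[k] (Finset U →₀ k) :=
  Finsupp.lmapDomain k k Subtype.val

theorem emb_single {k U : Type*} [Field k] [LinearOrder U] (n : ℕ)
    (s : {s : Finset U // s.card = n + 1}) (a : k) :
    emb k U n (Finsupp.single s a) = Finsupp.single s.1 a := by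
  simp [emb]

theorem emb_inj {k U : Type*} [Field k] [LinearOrder U] (n : ℕ) :
    Function.Injective (emb k U n) :=
  Finsupp.mapDomain_injective Subtype.val_injective

theorem DD_emb_succ {k U : Type*} [Field k] [LinearOrder U] (n : ℕ) (x : Chains k U (n + 1)) :
    DD k U (emb k U (n + 1) x) = emb k U n (bdry k k U n x) := by
  have key : DD k U ∘ₗ emb k U (n + 1) = emb k U n ∘ₗ bdry k k U n := by
    apply Finsupp.lhom_ext'
    intro s
    apply LinearMap.ext_ring
    simp only [LinearMap.comp_apply, Finsupp.lsingle_apply]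
    rw [emb_single, DD_single, bdry, Finsupp.lsum_single, LinearMap.sum_apply, map_sum,
      ← Finset.sum_attach]
    apply Finset.sum_congr rfl
    intro v _
    rw [LinearMap.smul_apply, map_zsmul, Finsupp.lsingle_apply, emb_single, sgn,
      ← Int.cast_smul_eq_zsmul k]
    simp
  exact LinearMap.congr_fun key x

theorem DD_emb_zero {k U : Type*} [Field k] [LinearOrder U] (x : Chains k U 0) :
    DD k U (emb k U 0 x) = Finsupp.single ∅ (aug k k U x) := by
  have key : DD k U ∘ₗ emb k U 0 = Finsupp.lsingle ∅ ∘ₗ aug k k U := by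
    apply Finsupp.lhom_ext'
    rintro ⟨s, hs⟩
    apply LinearMap.ext_ring
    simp only [LinearMap.comp_apply, Finsupp.lsingle_apply]
    obtain ⟨v, rfl⟩ := Finset.card_eq_one.1 hs
    rw [emb_single, DD_single, aug, Finsupp.lsum_single]
    simp [sgn, Finset.filter_singleton]
  exact LinearMap.congr_fun key x

theorem vanish_fill {k U : Type*} [Field k] [LinearOrder U] (X : Set (Finset U))
    (hX : IsComplex X) (n : ℕ) (h : RedHVanish k k U X ((n : ℤ) - 1))
    (z : Finset U →₀ k)
    (hz : z ∈ Finsupp.supported k k {s : Finset U | s.card = n ∧ (s = ∅ ∨ s ∈ X)})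
    (hDz : DD k U z = 0) :
    ∃ y ∈ Finsupp.supported k k {s : Finset U | s.card = n + 1 ∧ s ∈ X}, DD k U y = z := by
  classical
  cases n with
  | zero =>
    have hne : X.Nonempty := by simpa [RedHVanish] using h
    obtain ⟨s, hs⟩ := hne
    obtain ⟨v, hv⟩ := hX.1 s hs
    have hvX : {v} ∈ X := hX.2 s hs {v} (by simpa using hv) (by simp)
    refine ⟨z ∅ • Finsupp.single {v} 1,
      Submodule.smul_mem _ _ (Finsupp.single_mem_supported k _ ⟨by simp, hvX⟩), ?_⟩
    rw [map_smul, DD_single]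
    ext T
    by_cases hT : T = ∅
    · subst hT
      simp [sgn, Finset.filter_singleton]
    · have : z T = 0 := by
        by_contra hzT
        have := (Finsupp.mem_supported k _).1 hz (Finsupp.mem_support_iff.2 hzT)
        exact hT (Finset.card_eq_zero.1 this.1)
      simp [this, Finsupp.single_apply, Ne.symm hT]
  | succ n =>
    have hsub : Subsingleton (redH k k U X n) := by
      have e : ((n + 1 : ℕ) : ℤ) - 1 = n := by push_cast; ring
      rw [e, RedHVanish, if_neg (by omega), if_neg (by omega)] at h
      simpa using h
    let z' : Chains k U n := Finsupp.comapDomain Subtype.val z Subtype.val_injective.injOn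
    have hz' : emb k U n z' = z := by
      apply Finsupp.mapDomain_comapDomain _ Subtype.val_injective
      intro s hs
      exact ⟨⟨s, ((Finsupp.mem_supported k _).1 hz hs).1⟩, rfl⟩
    have hzin : z' ∈ chainsIn k k U X n := by
      refine (Finsupp.mem_supported k _).2 ?_
      intro s hs
      have hs' : s.1 ∈ z.support := by simpa [z'] using hs
      obtain ⟨h1, h2⟩ := (Finsupp.mem_supported k _).1 hz hs'
      rcases h2 with h2 | h2
      · rw [h2] at h1; simp at h1
      · exact h2
    have hcyc : z' ∈ cycles k k U n := by
      cases n with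
      | zero =>
        rw [← hz', DD_emb_zero] at hDz
        exact Finsupp.single_eq_zero.1 hDz
      | succ n =>
        rw [← hz', DD_emb_succ] at hDz
        exact emb_inj n (hDz.trans (map_zero _).symm)
    rw [Submodule.Quotient.subsingleton_iff, eq_top_iff] at hsub
    have hmem : z' ∈ boundariesIn k k U X n :=
      hsub (x := (⟨z', hcyc, hzin⟩ : cyclesIn k k U X n)) trivial
    obtain ⟨y, hy, hyz⟩ := hmem
    refine ⟨emb k U (n + 1) y, ?_, ?_⟩
    · refine (Finsupp.mem_supported k _).2 ?_
      intro s hs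
      have := Finsupp.mapDomain_support hs
      obtain ⟨t, ht, rfl⟩ := Finset.mem_image.1 this
      exact ⟨t.2, (Finsupp.mem_supported k _).1 hy ht⟩
    · rw [DD_emb_succ, hyz, hz']

theorem exists_phi {k U W : Type*} [Field k] [LinearOrder U] [LinearOrder W] (K : Set (Finset U))
    (hK : IsComplex K) (c : U → W)
    (h : ∀ S : Finset W, 1 ≤ S.card →
      RedHVanish k k U {s ∈ K | ¬ S ⊆ s.image c} ((S.card : ℤ) - 2)) (n : ℕ) :
    ∃ φ : Finset W → (Finset U →₀ k), φ ∅ = Finsupp.single ∅ 1 ∧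
      ∀ S : Finset W, S.card ≤ n →
        φ S ∈ Finsupp.supported k k {s : Finset U | s.card = S.card ∧ (s = ∅ ∨ s ∈ K) ∧
          (S = ∅ ∨ ¬ S ⊆ s.image c)} ∧
        DD k U (φ S) = ∑ v ∈ S, sgn k S v • φ (S.erase v) := by
  classical
  induction n with
  | zero =>
    refine ⟨fun _ => Finsupp.single ∅ 1, rfl, fun S hS => ?_⟩
    obtain rfl : S = ∅ := by simpa using hS
    exact ⟨Finsupp.single_mem_supported k _ (by simp), by simp [DD_single]⟩
  | succ n ih =>
    obtain ⟨φ, h0, hφ⟩ := ih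
    have step : ∀ S : Finset W, S.card = n + 1 → ∃ y : Finset U →₀ k,
        y ∈ Finsupp.supported k k {s : Finset U | s.card = n + 1 ∧ s ∈ K ∧ ¬ S ⊆ s.image c} ∧
        DD k U y = ∑ v ∈ S, sgn k S v • φ (S.erase v) := by
      intro S hS
      have hcard : ∀ v ∈ S, (S.erase v).card = n := by
        intro v hv; rw [Finset.card_erase_of_mem hv, hS]; rfl
      have hcx : IsComplex {s ∈ K | ¬ S ⊆ s.image c} := by
        refine ⟨fun s hs => hK.1 s hs.1, fun s hs t hts ht => ⟨hK.2 s hs.1 t hts ht, fun hh => ?_⟩⟩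
        exact hs.2 (hh.trans (Finset.image_subset_image hts))
      have hv := h S (by omega)
      rw [hS, show ((n + 1 : ℕ) : ℤ) - 2 = (n : ℤ) - 1 by push_cast; ring] at hv
      refine vanish_fill _ hcx n hv (∑ v ∈ S, sgn k S v • φ (S.erase v)) ?_ ?_
      · refine Submodule.sum_mem _ fun v hvS => Submodule.smul_mem _ _ ?_
        refine Finsupp.supported_mono ?_ (hφ (S.erase v) (hcard v hvS).le).1
        rintro s ⟨h1, h2, h3⟩
        refine ⟨h1.trans (hcard v hvS), ?_⟩
        rcases h2 with h2 | h2
        · exact Or.inl h2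
        rcases h3 with h3 | h3
        · rw [h3] at h1; left; simpa using h1
        · exact Or.inr ⟨h2, fun hh => h3 ((Finset.erase_subset v S).trans hh)⟩
      · let L : (Finset W →₀ k) →ₗ[k] (Finset U →₀ k) := Finsupp.linearCombination k φ
        have hL : ∀ T, L (Finsupp.single T 1) = φ T := by intro T; simp [L]
        have e : L (DD k W (DD k W (Finsupp.single S 1))) = 0 := by rw [DD_DD, map_zero]
        rw [← e, DD_single]
        simp only [map_sum, map_smul]
        apply Finset.sum_congr rfl
        intro v hvS
        rw [(hφ (S.erase v) (hcard v hvS).le).2, DD_single]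
        simp only [map_sum, map_smul, hL]
    choose y hy1 hy2 using step
    refine ⟨fun S => if hS : S.card = n + 1 then y S hS else φ S, by simp [h0], fun S hS => ?_⟩
    have herase : ∀ v ∈ S, (S.erase v).card ≠ n + 1 := by
      intro v hv
      have := Finset.card_erase_add_one hv
      omega
    have hsum : (∑ v ∈ S, sgn k S v • (if hS : (S.erase v).card = n + 1 then y (S.erase v) hS
        else φ (S.erase v))) = ∑ v ∈ S, sgn k S v • φ (S.erase v) := by
      apply Finset.sum_congr rfl
      intro v hv
      rw [dif_neg (herase v hv)]
    rw [hsum]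
    by_cases hc : S.card = n + 1
    · simp only [dif_pos hc]
      refine ⟨Finsupp.supported_mono ?_ (hy1 S hc), hy2 S hc⟩
      rintro s ⟨h1, h2, h3⟩
      exact ⟨h1.trans hc.symm, Or.inr h2, Or.inr h3⟩
    · simp only [dif_neg hc]
      exact hφ S (by omega)

/-- Sperner-type theorem via the complexes `K̃_S`: if `H̃_{m-1}(K) = 0` and
`H̃_{|S|-2}(K̃_S) = 0` for all `S` with `1 ≤ |S| ≤ m`, then `K` has a rainbow simplex. -/
theorem sperner_via_tilde {V : Type*} [LinearOrder V] (F : Type*) [Field F]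
    (m : ℕ) (K : Set (Finset V)) (hK : IsComplex K) (hvert : ∀ v : V, {v} ∈ K)
    (c : V → Fin (m + 1)) (hc : Function.Surjective c)
    (hH : RedHVanish F F V K ((m : ℤ) - 1))
    (h : ∀ S : Finset (Fin (m + 1)), 1 ≤ S.card → S.card ≤ m →
      RedHVanish F F V {s ∈ K | ¬ S ⊆ s.image c} ((S.card : ℤ) - 2)) :
    ∃ s ∈ K, ∀ i : Fin (m + 1), ∃! v, v ∈ s ∧ c v = i := by
  classical
  by_contra hno
  have hfull : ∀ s ∈ K, ¬ (Finset.univ ⊆ s.image c) := by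
    intro s hs hsub
    apply hno
    have hex : ∀ i, ∃ v ∈ s, c v = i := fun i => Finset.mem_image.1 (hsub (Finset.mem_univ i))
    choose g hg1 hg2 using hex
    refine ⟨Finset.univ.image g, hK.2 s hs _ ?_ (by simp), fun i => ⟨g i, ⟨by simp, hg2 i⟩, ?_⟩⟩
    · intro v hv
      obtain ⟨i, _, rfl⟩ := Finset.mem_image.1 hv
      exact hg1 i
    · rintro v ⟨hv, rfl⟩
      obtain ⟨i, _, rfl⟩ := Finset.mem_image.1 hv
      rw [hg2]
  have h' : ∀ S : Finset (Fin (m + 1)), 1 ≤ S.card →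
      RedHVanish F F V {s ∈ K | ¬ S ⊆ s.image c} ((S.card : ℤ) - 2) := by
    intro S hS
    by_cases hm : S.card ≤ m
    · exact h S hS hm
    · have hle := Finset.card_le_univ S
      rw [Fintype.card_fin] at hle
      have hcard : S.card = m + 1 := by omega
      obtain rfl : S = Finset.univ := by
        rw [← Finset.card_eq_iff_eq_univ, hcard, Fintype.card_fin]
      have e : {s ∈ K | ¬ Finset.univ ⊆ s.image c} = K := by
        ext s; exact ⟨fun hs => hs.1, fun hs => ⟨hs, hfull s hs⟩⟩
      rw [e, hcard, show ((m + 1 : ℕ) : ℤ) - 2 = (m : ℤ) - 1 by push_cast; ring]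
      exact hH
  obtain ⟨φ, h0, hφ⟩ := exists_phi (k := F) K hK c (by convert h') (m + 1)
  have hle : ∀ S : Finset (Fin (m + 1)), S.card ≤ m + 1 := by
    intro S
    simpa using Finset.card_le_univ S
  let L : (Finset (Fin (m + 1)) →₀ F) →ₗ[F] (Finset V →₀ F) := Finsupp.linearCombination F φ
  have hL : ∀ T, L (Finsupp.single T 1) = φ T := by intro T; simp [L]
  have hDL : DD F V ∘ₗ L = L ∘ₗ DD F (Fin (m + 1)) := by
    apply Finsupp.lhom_ext'
    intro S
    apply LinearMap.ext_ring
    simp only [LinearMap.comp_apply, Finsupp.lsingle_apply]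
    rw [hL, (hφ S (hle S)).2, DD_single]
    simp only [map_sum, map_smul, hL]
  refine no_offdiag (k := F) (0 : Fin (m + 1)) (pp F c ∘ₗ L) ?_ ?_ ?_
  · intro x
    rw [LinearMap.comp_apply, DD_pp]
    exact congrArg _ (LinearMap.congr_fun hDL x)
  · rw [LinearMap.comp_apply, hL, h0, pp_single, pp0_empty]
  · intro S hS
    rw [LinearMap.comp_apply, hL]
    have hmem : pp F c (φ S) ∈ Finsupp.supported F F {T | T ≠ S} := by
      rw [pp, Finsupp.linearCombination_apply]
      refine Submodule.sum_mem _ fun s hs => Submodule.smul_mem _ _ ?_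
      obtain ⟨h1, h2, h3⟩ := (Finsupp.mem_supported F _).1 (hφ S (hle S)).1 hs
      refine Finsupp.supported_mono ?_ (pp0_supp c s)
      rintro T ⟨hT1, hT2⟩ rfl
      rcases h3 with h3 | h3
      · exact hS.ne_empty h3
      · apply h3
        intro i hi
        obtain ⟨v, hv, e⟩ := hT2 i hi
        exact Finset.mem_image.2 ⟨v, hv, e⟩
    by_contra hne
    exact (Finsupp.mem_supported F _).1 hmem (Finsupp.mem_support_iff.2 hne) rfl
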